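/- Let σ : ℝ → ℝ be a continuous squashing function, i.e., σ is monotone nondecreasing, σ(t) → 0 as t → −∞, and σ(t) → 1 as t → +∞. Let d be a natural number, let K ⊆ ℝ^d (i.e., K ⊆ (Fin d → ℝ)) be a compact set, let g : (Fin d → ℝ) → ℝ be continuous, and let ε > 0. Then there exist a natural number M ≥ 1, output weights c : Fin M → ℝ, input weights w : Fin M → (Fin d → ℝ), and biases b : Fin M → ℝ such that for every x ∈ K, |(∑ m, c m * σ ((∑ i, w m i * x i) + b m)) − g x| ≤ ε. -/

import Mathlib

open Filter

/-!
Fix a feature map `Φ` sending weights `w` to continuous functions on a compact space `X`. The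
functions `exp (Φ w)` are closed under products, so by Stone–Weierstrass their linear span is dense
in `C(X, ℝ)`, and it is enough to approximate each `exp (Φ w)`. That is a problem in the single real
variable `s = Φ w x`, because `σ (a * s + b)` is again a unit of the network.

In one variable, cut the interval into cells on which `f` oscillates by at most `δ`. Start from the
constant `f (t 0)` and, for each cell `[p, q]`, add `(f q - f p) * σ (a * s + b)`, where `a` and `b`
make `σ` nearly `0` left of `p` and nearly `1` right of `q`. This term hardly changes the
approximation left of `p`, moves it from `f p` to `f q` right of `q`, and inside the cell costs at
most a multiple of `δ` because `σ` is bounded.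
-/

section UniformClosure

variable {X : Type*} {S : Submodule ℝ (X → ℝ)} {f : X → ℝ}

/-- The uniform limits of functions in `S`. Networks may be discontinuous, so this lives in
`X → ℝ` and not in `C(X, ℝ)`. -/
def uniformClosure (S : Submodule ℝ (X → ℝ)) : Submodule ℝ (X → ℝ) where
  carrier := {f | ∀ ε > 0, ∃ N ∈ S, ∀ x, |N x - f x| ≤ ε}
  zero_mem' ε hε := ⟨0, S.zero_mem, by simp [hε.le]⟩
  add_mem' {f₁ f₂} h₁ h₂ ε hε := by
    obtain ⟨N₁, hN₁, hf₁⟩ := h₁ (ε / 2) (half_pos hε)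
    obtain ⟨N₂, hN₂, hf₂⟩ := h₂ (ε / 2) (half_pos hε)
    refine ⟨N₁ + N₂, S.add_mem hN₁ hN₂, fun x => ?_⟩
    calc |(N₁ + N₂) x - (f₁ + f₂) x|
        = |(N₁ x - f₁ x) + (N₂ x - f₂ x)| := by simp only [Pi.add_apply, add_sub_add_comm]
      _ ≤ |N₁ x - f₁ x| + |N₂ x - f₂ x| := abs_add_le _ _
      _ ≤ ε := by linarith [hf₁ x, hf₂ x]
  smul_mem' c f hf ε hε := by
    obtain ⟨N, hN, hNf⟩ := hf (ε / (|c| + 1)) (by positivity)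
    refine ⟨c • N, S.smul_mem c hN, fun x => ?_⟩
    calc |(c • N) x - (c • f) x|
        = |c| * |N x - f x| := by simp only [Pi.smul_apply, smul_eq_mul, ← mul_sub, abs_mul]
      _ ≤ (|c| + 1) * (ε / (|c| + 1)) :=
          mul_le_mul (by linarith) (hNf x) (abs_nonneg _) (by positivity)
      _ = ε := mul_div_cancel₀ _ (by positivity)

lemma mem_uniformClosure_of_forall_exists_near
    (h : ∀ ε > 0, ∃ N ∈ uniformClosure S, ∀ x, |N x - f x| ≤ ε) : f ∈ uniformClosure S := by
  intro ε hε
  obtain ⟨N, hN, hNf⟩ := h (ε / 2) (half_pos hε)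
  obtain ⟨N', hN', hN'N⟩ := hN (ε / 2) (half_pos hε)
  exact ⟨N', hN', fun x => (abs_sub_le _ (N x) _).trans (by linarith [hN'N x, hNf x])⟩

end UniformClosure

section OneVariable

lemma exists_affine_comp_near_step {E : Type*} [PseudoMetricSpace E] {φ : ℝ → E} {l l' : E}
    (hbot : Tendsto φ atBot (nhds l)) (htop : Tendsto φ atTop (nhds l')) {p q η : ℝ} (hpq : p < q)
    (hη : 0 < η) :
    ∃ a b : ℝ, (∀ s ≤ p, dist (φ (a * s + b)) l ≤ η) ∧ ∀ s ≥ q, dist (φ (a * s + b)) l' ≤ η := by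
  obtain ⟨A, hA⟩ := eventually_atBot.1 (hbot.eventually (Metric.closedBall_mem_nhds l hη))
  obtain ⟨B, hB⟩ := eventually_atTop.1
    ((htop.eventually (Metric.closedBall_mem_nhds l' hη)).and (eventually_ge_atTop A))
  have hlen : 0 < q - p := sub_pos.2 hpq
  have hslope : 0 ≤ (B - A) / (q - p) := div_nonneg (sub_nonneg.2 (hB B le_rfl).2) hlen.le
  have hq : (B - A) / (q - p) * (q - p) = B - A := div_mul_cancel₀ _ hlen.ne'
  -- the affine map sending `p` to `A` and `q` to `B`
  refine ⟨(B - A) / (q - p), A - (B - A) / (q - p) * p, fun s hs => hA _ ?_,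
    fun s hs => (hB _ ?_).1⟩
  · linarith [mul_le_mul_of_nonneg_left hs hslope]
  · linarith [mul_le_mul_of_nonneg_left hs hslope]

lemma exists_monotone_partition_dist_le {E : Type*} [PseudoMetricSpace E] {f : ℝ → E} {a b δ : ℝ}
    (hab : a ≤ b) (hf : ContinuousOn f (Set.Icc a b)) (hδ : 0 < δ) :
    ∃ t : ℕ → ℝ, Monotone t ∧ t 0 = a ∧ (∃ n, t n = b) ∧
      ∀ j, ∀ s ∈ Set.Icc (t j) (t (j + 1)), dist (f s) (f (t j)) ≤ δ := by
  have hf' : Continuous fun s : Set.Icc a b => f s := hf.domRestrict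
  obtain ⟨t, ht0, hmono, ⟨n, hn⟩, hcell⟩ := exists_monotone_Icc_subset_open_cover_Icc hab
    (c := fun i => {s | dist (f s) (f i) < δ / 2})
    (fun i => isOpen_lt (hf'.dist continuous_const) continuous_const)
    (fun s _ => Set.mem_iUnion.2 ⟨s, by simpa using hδ⟩)
  refine ⟨fun j => t j, fun i j hij => hmono hij, ht0, ⟨n, hn n le_rfl⟩, fun j s hs => ?_⟩
  obtain ⟨i, hi⟩ := hcell j
  have hsab : s ∈ Set.Icc a b := ⟨(t j).2.1.trans hs.1, hs.2.trans (t (j + 1)).2.2⟩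
  have hs' : dist (f s) (f i) < δ / 2 := hi (show ⟨s, hsab⟩ ∈ Set.Icc (t j) (t (j + 1)) from hs)
  have htj : dist (f (t j)) (f i) < δ / 2 := hi ⟨le_rfl, hmono j.le_succ⟩
  linarith [dist_triangle_right (f s) (f (t j)) (f i)]

variable {σ : ℝ → ℝ} {S : Submodule ℝ (ℝ → ℝ)}

lemma const_mem_of_affine_comp_mem (htop : Tendsto σ atTop (nhds 1))
    (hS : ∀ a b : ℝ, (fun s => σ (a * s + b)) ∈ S) (c : ℝ) : (fun _ => c) ∈ S := by
  obtain ⟨b, hb⟩ := (htop.eventually_ne one_ne_zero).exists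
  convert S.smul_mem (c / σ b) (hS 0 b) using 1
  ext s
  simp [hb]

variable {C : ℝ}

/-- The control to the right of `t n` is what allows the next cell to be appended. -/
lemma exists_mem_near_of_partition (hbound : ∀ s, |σ s| ≤ C) (hbot : Tendsto σ atBot (nhds 0))
    (htop : Tendsto σ atTop (nhds 1)) (hS : ∀ a b : ℝ, (fun s => σ (a * s + b)) ∈ S)
    {f : ℝ → ℝ} {t : ℕ → ℝ} (ht : Monotone t) {δ : ℝ}
    (hosc : ∀ j, ∀ s ∈ Set.Icc (t j) (t (j + 1)), |f s - f (t j)| ≤ δ) (n : ℕ) :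
    ∀ η > 0, ∃ N ∈ S, (∀ s ∈ Set.Icc (t 0) (t n), |N s - f s| ≤ (C + 1) * δ + η) ∧
      ∀ s ≥ t n, |N s - f (t n)| ≤ η := by
  have hC : 0 ≤ C := (abs_nonneg _).trans (hbound 0)
  have hδ : 0 ≤ δ := (abs_nonneg _).trans (hosc 0 _ ⟨le_rfl, ht (Nat.le_succ 0)⟩)
  induction n with
  | zero =>
    intro η hη
    refine ⟨_, const_mem_of_affine_comp_mem htop hS (f (t 0)), fun s hs => ?_, by simp [hη.le]⟩
    rw [le_antisymm hs.2 hs.1, sub_self, abs_zero]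
    positivity
  | succ n ih =>
    intro η hη
    rcases (ht n.le_succ).eq_or_lt with heq | hlt
    · simpa only [← heq] using ih η hη
    obtain ⟨N, hN, hleft, hright⟩ := ih (η / 2) (half_pos hη)
    set D := f (t (n + 1)) - f (t n) with hD
    obtain ⟨a, b, hlow, hhigh⟩ := exists_affine_comp_near_step (hbot.const_mul D)
      (htop.const_mul D) hlt (half_pos hη)
    simp only [Real.dist_eq, mul_zero, mul_one, sub_zero] at hlow hhigh
    refine ⟨N + D • fun s => σ (a * s + b), S.add_mem hN (S.smul_mem D (hS a b)),
      fun s hs => ?_, fun s hs => ?_⟩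
    · simp only [Pi.add_apply, Pi.smul_apply, smul_eq_mul]
      rcases le_total s (t n) with hsn | hsn
      · rw [add_sub_right_comm]
        linarith [abs_add_le (N s - f s) (D * σ (a * s + b)), hleft s ⟨hs.1, hsn⟩, hlow s hsn]
      · have hDσ : |D * σ (a * s + b)| ≤ δ * C := by
          rw [abs_mul]
          exact mul_le_mul (hosc n _ ⟨hlt.le, le_rfl⟩) (hbound _) (abs_nonneg _) hδ
        calc |N s + D * σ (a * s + b) - f s|
            = |(N s - f (t n)) + D * σ (a * s + b) + (f (t n) - f s)| := by ring_nf
          _ ≤ |N s - f (t n)| + |D * σ (a * s + b)| + |f (t n) - f s| := abs_add_three _ _ _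
          _ ≤ η / 2 + δ * C + δ := by
              rw [abs_sub_comm (f (t n))]
              exact add_le_add_three (hright s hsn) hDσ (hosc n s ⟨hsn, hs.2⟩)
          _ ≤ (C + 1) * δ + η := by linarith
    · simp only [Pi.add_apply, Pi.smul_apply, smul_eq_mul]
      calc |N s + D * σ (a * s + b) - f (t (n + 1))|
          = |(N s - f (t n)) + (D * σ (a * s + b) - D)| := by rw [hD]; ring_nf
        _ ≤ |N s - f (t n)| + |D * σ (a * s + b) - D| := abs_add_le _ _
        _ ≤ η := by linarith [hright s (hlt.le.trans hs), hhigh s hs]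

lemma exists_mem_near_on_Icc (hbound : ∀ s, |σ s| ≤ C) (hbot : Tendsto σ atBot (nhds 0))
    (htop : Tendsto σ atTop (nhds 1)) (hS : ∀ a b : ℝ, (fun s => σ (a * s + b)) ∈ S)
    {f : ℝ → ℝ} {a b : ℝ} (hf : ContinuousOn f (Set.Icc a b)) {ε : ℝ} (hε : 0 < ε) :
    ∃ N ∈ S, ∀ s ∈ Set.Icc a b, |N s - f s| ≤ ε := by
  rcases lt_or_ge b a with hba | hab
  · exact ⟨0, S.zero_mem, by simp [Set.Icc_eq_empty_of_lt hba]⟩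
  have hC : 0 ≤ C := (abs_nonneg _).trans (hbound 0)
  obtain ⟨t, ht, rfl, ⟨n, rfl⟩, hosc⟩ :=
    exists_monotone_partition_dist_le hab hf (δ := ε / 2 / (C + 1)) (by positivity)
  obtain ⟨N, hN, hNf, -⟩ :=
    exists_mem_near_of_partition hbound hbot htop hS ht hosc n (ε / 2) (half_pos hε)
  rw [mul_div_cancel₀ _ (by positivity), add_halves] at hNf
  exact ⟨N, hN, hNf⟩

end OneVariable

section Exponentials

variable {X W : Type*} [TopologicalSpace X] [AddMonoid W]

/-- The exponentials `x ↦ exp (Φ w x)`, as a monoid homomorphism in the weight `w`. -/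
noncomputable def expHom (Φ : W →+ C(X, ℝ)) : Multiplicative W →* C(X, ℝ) where
  toFun w := ⟨fun x => Real.exp (Φ w.toAdd x), by fun_prop⟩
  map_one' := by ext x; simp
  map_mul' u v := by ext x; simp [Real.exp_add]

lemma exists_mem_span_expHom_near [CompactSpace X] {Φ : W →+ C(X, ℝ)}
    (hΦ : ∀ ⦃x y⦄, x ≠ y → ∃ w, Φ w x ≠ Φ w y) (g : C(X, ℝ)) {ε : ℝ} (hε : 0 < ε) :
    ∃ f ∈ Submodule.span ℝ (Set.range (expHom Φ)), ‖f - g‖ < ε := by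
  have hsep : (Algebra.adjoin ℝ (Set.range (expHom Φ))).SeparatesPoints := by
    intro x y hxy
    obtain ⟨w, hw⟩ := hΦ hxy
    exact ⟨_, ⟨expHom Φ (.ofAdd w), Algebra.subset_adjoin ⟨_, rfl⟩, rfl⟩,
      Real.exp_injective.ne hw⟩
  -- the exponentials form a submonoid, so the algebra they generate is their linear span
  have hspan : Subalgebra.toSubmodule (Algebra.adjoin ℝ (Set.range (expHom Φ))) =
      Submodule.span ℝ (Set.range (expHom Φ)) := by
    rw [Algebra.adjoin_eq_span, ← MonoidHom.coe_mrange, Submonoid.closure_eq]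
  obtain ⟨⟨f, hf⟩, hfg⟩ :=
    ContinuousMap.exists_mem_subalgebra_near_continuousMap_of_separatesPoints _ hsep g ε hε
  exact ⟨f, hspan ▸ hf, hfg⟩

end Exponentials

section Networks

variable {X W : Type*} [TopologicalSpace X] [AddCommGroup W] [Module ℝ W] {σ : ℝ → ℝ} {C : ℝ}
  {Φ : W →ₗ[ℝ] C(X, ℝ)}

/-- The functions computed by one hidden layer with activation `σ` on the features `Φ`: linear
combinations of the units `x ↦ σ (Φ w x + b)`. -/
def networks (σ : ℝ → ℝ) (Φ : W →ₗ[ℝ] C(X, ℝ)) : Submodule ℝ (X → ℝ) :=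
  Submodule.span ℝ (Set.range fun (p : W × ℝ) x => σ (Φ p.1 x + p.2))

lemma exists_sum_of_mem_networks {N : X → ℝ} (hN : N ∈ networks σ Φ) :
    ∃ (M : ℕ) (_ : 1 ≤ M) (c : Fin M → ℝ) (w : Fin M → W) (b : Fin M → ℝ),
      ∀ x, N x = ∑ m, c m * σ (Φ (w m) x + b m) := by
  obtain ⟨M, c, u, rfl⟩ := Submodule.mem_span_set'.1 hN
  choose p hp using fun m => (u m).2
  -- a unit of output weight `0` is prepended, since `M` may be `0`
  refine ⟨M + 1, by omega, Fin.cons 0 c, Fin.cons 0 fun m => (p m).1,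
    Fin.cons 0 fun m => (p m).2, fun x => ?_⟩
  simp [Fin.sum_univ_succ, ← hp]

variable [CompactSpace X]

lemma comp_mem_uniformClosure_networks (hbound : ∀ s, |σ s| ≤ C)
    (hbot : Tendsto σ atBot (nhds 0)) (htop : Tendsto σ atTop (nhds 1)) {f : ℝ → ℝ}
    (hf : Continuous f) (w : W) : f ∘ Φ w ∈ uniformClosure (networks σ Φ) := by
  intro ε hε
  have hunit (a b : ℝ) : (fun s => σ (a * s + b)) ∈
      (networks σ Φ).comap (LinearMap.funLeft ℝ ℝ (Φ w)) :=
    Submodule.subset_span ⟨(a • w, b), by ext x; simp [LinearMap.funLeft_apply]⟩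
  obtain ⟨N, hN, hNf⟩ := exists_mem_near_on_Icc hbound hbot htop hunit
    (a := -‖Φ w‖) (b := ‖Φ w‖) hf.continuousOn hε
  exact ⟨N ∘ Φ w, hN, fun x => hNf _ (abs_le.1 ((Φ w).norm_coe_le_norm x))⟩

theorem continuousMap_mem_uniformClosure_networks (hbound : ∀ s, |σ s| ≤ C)
    (hbot : Tendsto σ atBot (nhds 0)) (htop : Tendsto σ atTop (nhds 1))
    (hΦ : ∀ ⦃x y⦄, x ≠ y → ∃ w, Φ w x ≠ Φ w y) (g : C(X, ℝ)) :
    ⇑g ∈ uniformClosure (networks σ Φ) := by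
  have hspan : Submodule.span ℝ (Set.range (expHom Φ.toAddMonoidHom)) ≤
      (uniformClosure (networks σ Φ)).comap (ContinuousMap.coeFnLinearMap ℝ) := by
    rw [Submodule.span_le]
    rintro _ ⟨w, rfl⟩
    exact comp_mem_uniformClosure_networks hbound hbot htop Real.continuous_exp w.toAdd
  refine mem_uniformClosure_of_forall_exists_near fun ε hε => ?_
  obtain ⟨f, hf, hfg⟩ := exists_mem_span_expHom_near (Φ := Φ.toAddMonoidHom) hΦ g hε
  exact ⟨f, hspan hf, fun x => ((f - g).norm_coe_le_norm x).trans hfg.le⟩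

theorem stmt_6_general (hbound : ∀ s, |σ s| ≤ C) (hbot : Tendsto σ atBot (nhds 0))
    (htop : Tendsto σ atTop (nhds 1)) (hΦ : ∀ ⦃x y⦄, x ≠ y → ∃ w, Φ w x ≠ Φ w y)
    (g : C(X, ℝ)) {ε : ℝ} (hε : 0 < ε) :
    ∃ (M : ℕ) (_ : 1 ≤ M) (c : Fin M → ℝ) (w : Fin M → W) (b : Fin M → ℝ),
      ∀ x, |(∑ m, c m * σ (Φ (w m) x + b m)) - g x| ≤ ε := by
  obtain ⟨N, hN, hNg⟩ := continuousMap_mem_uniformClosure_networks hbound hbot htop hΦ g ε hε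
  obtain ⟨M, hM, c, w, b, hsum⟩ := exists_sum_of_mem_networks hN
  exact ⟨M, hM, c, w, b, fun x => hsum x ▸ hNg x⟩

end Networks

lemma abs_le_one_of_monotone {σ : ℝ → ℝ} (hmono : Monotone σ) (hbot : Tendsto σ atBot (nhds 0))
    (htop : Tendsto σ atTop (nhds 1)) (s : ℝ) : |σ s| ≤ 1 :=
  abs_le.2 ⟨by linarith [hmono.le_of_tendsto hbot s], hmono.ge_of_tendsto htop s⟩

section DotProduct

variable {ι : Type*} [Fintype ι]

/-- The features `x ↦ w ⬝ᵥ x` on a set `K`, as a linear function of the weight vector `w`. -/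
def dotProductOn (K : Set (ι → ℝ)) : (ι → ℝ) →ₗ[ℝ] C(K, ℝ) where
  toFun w := ⟨fun x => w ⬝ᵥ x.1, continuous_const.dotProduct continuous_subtype_val⟩
  map_add' u v := by ext x; exact add_dotProduct u v x.1
  map_smul' a w := by ext x; exact smul_dotProduct a w x.1

lemma exists_dotProductOn_ne (K : Set (ι → ℝ)) ⦃x y : K⦄ (hxy : x ≠ y) :
    ∃ w, dotProductOn K w x ≠ dotProductOn K w y := by
  contrapose! hxy
  refine Subtype.ext (dotProduct_eq _ _ fun w => ?_)
  rw [dotProduct_comm, dotProduct_comm y.1]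
  exact hxy w

end DotProduct

/-- Scalar-output universal approximation theorem (Hornik et al.): a single-hidden-layer
feedforward network with continuous squashing activation `σ` uniformly approximates any
continuous real-valued function on a compact subset of `ℝ^d` to accuracy `ε`. -/
theorem stmt_6 (σ : ℝ → ℝ) (hσ_cont : Continuous σ) (hσ_mono : Monotone σ)
    (hσ_bot : Tendsto σ atBot (nhds 0)) (hσ_top : Tendsto σ atTop (nhds 1))
    (d : ℕ) (K : Set (Fin d → ℝ)) (hK : IsCompact K)
    (g : (Fin d → ℝ) → ℝ) (hg : Continuous g) (ε : ℝ) (hε : 0 < ε) :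
    ∃ (M : ℕ) (_ : 1 ≤ M) (c : Fin M → ℝ) (w : Fin M → (Fin d → ℝ)) (b : Fin M → ℝ),
      ∀ x ∈ K, |(∑ m, c m * σ ((∑ i, w m i * x i) + b m)) - g x| ≤ ε := by
  have : CompactSpace K := isCompact_iff_compactSpace.1 hK
  obtain ⟨M, hM, c, w, b, h⟩ := stmt_6_general (abs_le_one_of_monotone hσ_mono hσ_bot hσ_top)
    hσ_bot hσ_top (exists_dotProductOn_ne K) ⟨fun x => g x, by fun_prop⟩ hε
  exact ⟨M, hM, c, w, b, fun x hx => h ⟨x, hx⟩⟩
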